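/- Assume p_1,…,p_m are positive rational numbers, and let (V, p) be a feasible quiver datum with dimension vector d = (d_1,…,d_k,n_1,…,n_m). Then there exist a geometric datum (W, p) of the same dimension vector and a one-parameter family of tuples of invertible matrices λ̃(t) (for t ∈ ℝ, t ≠ 0, with each λ̃(t)_x ∈ GL(d_x, ℝ) depending on t as a Laurent-monomial matrix function, namely λ̃(t)_x = B_x λ(t)_x A_x for fixed invertible A_x, B_x and diagonal λ(t)_x with entries integer powers of t) such that lim_{t→0} λ̃(t)·V = W. In particular, for every ε > 0 there exists a tuple Ṽ in the orbit {A·V : A ∈ ∏_x GL(d_x, ℝ)} such that ‖Ṽ − W‖_F < ε, where ‖·‖_F denotes the Frobenius norm on the tuple of matrices. -/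

import Mathlib

open Matrix BigOperators

/-- The value of the capacity functional of a quiver datum `(V, p)` at a tuple `Y`
of `n j × n j` matrices. -/
noncomputable def capVal {k m : ℕ} {d : Fin k → ℕ} {n : Fin m → ℕ} {A : Fin k → Fin m → ℕ}
    (p : Fin m → ℝ)
    (V : ∀ i : Fin k, ∀ j : Fin m, Fin (A i j) → Matrix (Fin (n j)) (Fin (d i)) ℝ)
    (Y : ∀ j : Fin m, Matrix (Fin (n j)) (Fin (n j)) ℝ) : ℝ :=
  (∏ i : Fin k, (∑ j : Fin m, p j • ∑ a : Fin (A i j), (V i j a)ᵀ * Y j * V i j a).det) /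
    ∏ j : Fin m, (Y j).det ^ (p j)

/-- The capacity `cap(V, p)` of a quiver datum: the infimum of the capacity functional
over all tuples of positive definite matrices. -/
noncomputable def cap {k m : ℕ} {d : Fin k → ℕ} {n : Fin m → ℕ} {A : Fin k → Fin m → ℕ}
    (p : Fin m → ℝ)
    (V : ∀ i : Fin k, ∀ j : Fin m, Fin (A i j) → Matrix (Fin (n j)) (Fin (d i)) ℝ) : ℝ :=
  sInf { r : ℝ | ∃ Y : ∀ j : Fin m, Matrix (Fin (n j)) (Fin (n j)) ℝ,
    (∀ j, (Y j).PosDef) ∧ r = capVal p V Y }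

/-- A quiver datum `(V, p)` is extremizable if it is feasible (`cap(V,p) > 0`) and the
infimum defining the capacity is attained at some tuple of positive definite matrices. -/
def Extremizable {k m : ℕ} {d : Fin k → ℕ} {n : Fin m → ℕ} {A : Fin k → Fin m → ℕ}
    (p : Fin m → ℝ)
    (V : ∀ i : Fin k, ∀ j : Fin m, Fin (A i j) → Matrix (Fin (n j)) (Fin (d i)) ℝ) : Prop :=
  0 < cap p V ∧ ∃ Y : ∀ j : Fin m, Matrix (Fin (n j)) (Fin (n j)) ℝ,
    (∀ j, (Y j).PosDef) ∧ capVal p V Y = cap p V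

/-- A quiver datum `(V, p)` is geometric. -/
def IsGeometric {k m : ℕ} {d : Fin k → ℕ} {n : Fin m → ℕ} {A : Fin k → Fin m → ℕ}
    (p : Fin m → ℝ)
    (V : ∀ i : Fin k, ∀ j : Fin m, Fin (A i j) → Matrix (Fin (n j)) (Fin (d i)) ℝ) : Prop :=
  (∀ i, ∑ j : Fin m, p j • ∑ a : Fin (A i j), (V i j a)ᵀ * V i j a = 1) ∧
  (∀ j, ∑ i : Fin k, ∑ a : Fin (A i j), V i j a * (V i j a)ᵀ = 1)

open Topology Filter

/-!
Rescaling nearly optimal points of the capacity functional to the identity gives data `W` in the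
orbit of `V` with `∑ p Wᵀ W = 1` and capacity close to the value of the functional at the
identity. Such data stay bounded, and so do the base changes `V ⟶ W` once they are normalized, so a
limit yields a nonzero morphism of representations from `V` to a datum whose capacity is attained
at the identity, which makes it geometric. If this morphism is invertible, `V` is equivalent to a
geometric datum. Otherwise let the one-parameter subgroup scaling its kernel act on both data:
feasibility of either forces the weight of the subgroup to be nonnegative, with opposite signs, so
the weight vanishes and the limit of `V`, the direct sum of the kernel and the quotient by it, is
again feasible. By induction on the dimension both summands degenerate to geometric data, and
scaling the kernel by a further large power of `t` kills the extension between them.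
-/

section Matrices

lemma eventually_posDef_one_add_smul {n : Type*} [Finite n] [DecidableEq n] {X : Matrix n n ℝ}
    (hX : X.IsHermitian) :
    ∀ᶠ s : ℝ in 𝓝 0, (1 + s • X).PosDef := by
  have := Fintype.ofFinite n
  have hpos (r : n) : ∀ᶠ s : ℝ in 𝓝 0, 0 < 1 + s * hX.eigenvalues r :=
    Continuous.tendsto (f := fun s : ℝ => 1 + s * hX.eigenvalues r) (by fun_prop) 0
      |>.eventually (lt_mem_nhds (by simp))
  filter_upwards [eventually_all.mpr hpos] with s hs
  let U : Matrix n n ℝ := hX.eigenvectorUnitary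
  have hdiag : 1 + s • X = U * diagonal (fun r => 1 + s * hX.eigenvalues r) * star U := by
    have hsplit : diagonal (fun r => 1 + s * hX.eigenvalues r) =
        1 + s • diagonal hX.eigenvalues := by
      rw [← diagonal_one, ← diagonal_smul, diagonal_add]; rfl
    conv_lhs => rw [hX.spectral_theorem]
    simp [hsplit, Unitary.conjStarAlgAut_apply, mul_add, add_mul, U]
  rw [hdiag, IsUnit.posDef_star_right_conjugate_iff Unitary.isUnit_coe, posDef_diagonal_iff]
  exact hs

lemma posDef_fromBlocks_zero {m n : Type*} [Finite m] [Finite n] {A : Matrix m m ℝ}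
    {B : Matrix n n ℝ} (hA : A.PosDef) (hB : B.PosDef) : (fromBlocks A 0 0 B).PosDef := by
  classical
  have := Fintype.ofFinite m
  have := Fintype.ofFinite n
  have := hA.isUnit.invertible
  have hsemi : (fromBlocks A 0 0 B).PosSemidef := by
    simpa using (PosDef.fromBlocks₁₁ 0 B hA).mpr (by simpa using hB.posSemidef)
  rw [hsemi.posDef_iff_det_ne_zero, det_fromBlocks_zero₂₁]
  exact mul_ne_zero hA.det_pos.ne' hB.det_pos.ne'

variable {n : Type*} [Fintype n] [DecidableEq n]

lemma exists_eq_units_mul_diagonal_mul {K : Type*} [Field K] (M : Matrix n n K) :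
    ∃ (P Q : (Matrix n n K)ˣ) (δ : n → K), M = P * diagonal δ * Q := by
  obtain ⟨L, L', δ, hM⟩ := Pivot.exists_list_transvec_mul_diagonal_mul_list_transvec M
  have isUnit_prod (L : List (TransvectionStruct n K)) :
      IsUnit (L.map TransvectionStruct.toMatrix).prod := by
    simp [isUnit_iff_isUnit_det, TransvectionStruct.det_toMatrix_prod]
  exact ⟨(isUnit_prod L).unit, (isUnit_prod L').unit, δ, hM⟩

lemma exists_isUnit_transpose_mul_self_eq {Y : Matrix n n ℝ} (hY : Y.PosDef) :
    ∃ B : Matrix n n ℝ, IsUnit B ∧ Bᵀ * B = Y := by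
  open scoped MatrixOrder in
  obtain ⟨B, hB, rfl⟩ := CStarAlgebra.isStrictlyPositive_iff_eq_star_mul_self.mp
    (isStrictlyPositive_iff_posDef.mpr hY)
  exact ⟨B, hB, rfl⟩

lemma hasDerivAt_det_one_add_smul {𝕜 : Type*} [NontriviallyNormedField 𝕜] (M : Matrix n n 𝕜) :
    HasDerivAt (fun s : 𝕜 => (1 + s • M).det) M.trace 0 := by
  have hpoly (q : Polynomial 𝕜) :
      HasDerivAt (fun s : 𝕜 => 1 + M.trace * s + q.eval s * s ^ 2) M.trace 0 :=
    (((hasDerivAt_id' 0).const_mul M.trace).const_add 1).fun_add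
      ((q.hasDerivAt 0).fun_mul (hasDerivAt_pow 2 0)) |>.congr_deriv (by simp)
  rw [funext fun s => det_one_add_smul s M]
  exact hpoly _

lemma hasDerivAt_prod_det_one_add_smul_rpow {J : Type*} [Fintype J] {N : J → Type*}
    [∀ j, Fintype (N j)] [∀ j, DecidableEq (N j)] (p : J → ℝ) (X : ∀ j, Matrix (N j) (N j) ℝ) :
    HasDerivAt (fun s : ℝ => ∏ j, ((1 + s • X) j).det ^ p j) (∑ j, p j * (X j).trace) 0 := by
  classical
  exact (HasDerivAt.fun_finsetProd fun j (_ : j ∈ Finset.univ) =>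
    (hasDerivAt_det_one_add_smul (X j)).rpow_const (p := p j) (by simp)).congr_deriv
      (by simp [mul_comm])

end Matrices

/-- A quiver datum on the bipartite quiver with source vertices `I`, target vertices `J` and
arrows `𝒜 i j` from `i` to `j`. Coordinates are indexed by arbitrary types `D i` and `N j` rather
than `Fin (d i)` and `Fin (n j)`, so that coordinate subspaces carry data of the same kind. -/
abbrev QuiverDatum {I J : Type*} (D : I → Type*) (N : J → Type*) (𝒜 : I → J → Type*) :=
  ∀ i j, 𝒜 i j → Matrix (N j) (D i) ℝ

namespace QuiverDatum

variable {I J : Type*} {𝒜 : I → J → Type*} {D : I → Type*} {N : J → Type*}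

section Gram

variable [Fintype J] [∀ i j, Fintype (𝒜 i j)] [∀ j, Fintype (N j)]

/-- The matrix `∑ j, p j ∑ a, Vₐᵀ Yⱼ Vₐ` at the source vertex `i`, whose determinant is a factor of
the numerator of the capacity functional. -/
def domainGram (p : J → ℝ) (V : QuiverDatum D N 𝒜) (Y : ∀ j, Matrix (N j) (N j) ℝ) (i : I) :
    Matrix (D i) (D i) ℝ :=
  ∑ j, p j • ∑ a, (V i j a)ᵀ * Y j * V i j a

/-- The matrix `∑ i, ∑ a, Vₐ Vₐᵀ` at the target vertex `j`. -/
def codomainGram [Fintype I] [∀ i, Fintype (D i)] (V : QuiverDatum D N 𝒜) (j : J) :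
    Matrix (N j) (N j) ℝ :=
  ∑ i, ∑ a, V i j a * (V i j a)ᵀ

/-- Geometric data, for arbitrary index types; see `geometric_iff_isGeometric`. -/
def Geometric [Fintype I] [∀ i, Fintype (D i)] [∀ i, DecidableEq (D i)] [∀ j, DecidableEq (N j)]
    (p : J → ℝ) (V : QuiverDatum D N 𝒜) : Prop :=
  domainGram p V 1 = 1 ∧ codomainGram V = 1

/-- The base change `Vₐ ↦ Hⱼ Vₐ Gᵢ`; for invertible `G` this is the action of `(G⁻¹, H)`. -/
def baseChange [∀ i, Fintype (D i)] (H : ∀ j, Matrix (N j) (N j) ℝ) (V : QuiverDatum D N 𝒜)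
    (G : ∀ i, Matrix (D i) (D i) ℝ) : QuiverDatum D N 𝒜 :=
  fun i j a => H j * V i j a * G i

variable {p : J → ℝ}

lemma continuous_domainGram (Y : ∀ j, Matrix (N j) (N j) ℝ) :
    Continuous fun V : QuiverDatum D N 𝒜 => domainGram p V Y := by
  unfold domainGram
  fun_prop

lemma domainGram_posSemidef [∀ i, Finite (D i)] (hp : ∀ j, 0 ≤ p j) (V : QuiverDatum D N 𝒜)
    {Y : ∀ j, Matrix (N j) (N j) ℝ} (hY : ∀ j, (Y j).PosSemidef) (i : I) :
    (domainGram p V Y i).PosSemidef :=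
  posSemidef_sum _ fun j _ => (posSemidef_sum _ fun a _ =>
    (hY j).conjTranspose_mul_mul_same (V i j a)).smul (hp j)

lemma domainGram_add_smul (V : QuiverDatum D N 𝒜) (Y X : ∀ j, Matrix (N j) (N j) ℝ) (s : ℝ)
    (i : I) : domainGram p V (Y + s • X) i = domainGram p V Y i + s • domainGram p V X i := by
  simp only [domainGram, Pi.add_apply, Pi.smul_apply, Matrix.mul_add, Matrix.add_mul,
    Matrix.mul_smul, Matrix.smul_mul, Finset.sum_add_distrib, smul_add, Finset.smul_sum,
    smul_comm s]

lemma abs_apply_le_of_domainGram_eq_one [∀ i, DecidableEq (D i)] [∀ j, DecidableEq (N j)]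
    (hp : ∀ j, 0 < p j) {V : QuiverDatum D N 𝒜} (hV : domainGram p V 1 = 1) (i : I) (j : J)
    (a : 𝒜 i j) (r : N j) (c : D i) : |V i j a r c| ≤ 1 + (p j)⁻¹ := by
  have hdiag : ∑ j, p j * ∑ a, ∑ r, V i j a r c ^ 2 = 1 := by
    simpa [domainGram, Matrix.sum_apply, Matrix.mul_apply, sq] using congrFun₂ (congrFun hV i) c c
  have hentry : p j * V i j a r c ^ 2 ≤ 1 := calc
    p j * V i j a r c ^ 2 ≤ p j * ∑ a, ∑ r, V i j a r c ^ 2 := by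
      refine mul_le_mul_of_nonneg_left ?_ (hp j).le
      exact (Finset.single_le_sum (f := fun r => V i j a r c ^ 2) (fun _ _ => sq_nonneg _)
        (Finset.mem_univ r)).trans (Finset.single_le_sum (f := fun a => ∑ r, V i j a r c ^ 2)
        (fun _ _ => Finset.sum_nonneg fun _ _ => sq_nonneg _) (Finset.mem_univ a))
    _ ≤ ∑ j, p j * ∑ a, ∑ r, V i j a r c ^ 2 :=
      Finset.single_le_sum (f := fun j => p j * ∑ a, ∑ r, V i j a r c ^ 2)
        (fun j _ => by have := hp j; positivity) (Finset.mem_univ j)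
    _ = 1 := hdiag
  have hsq : V i j a r c ^ 2 ≤ (p j)⁻¹ := by rwa [inv_eq_one_div, le_div_iff₀' (hp j)]
  have hinv : 0 < (p j)⁻¹ := inv_pos.mpr (hp j)
  exact abs_le_of_sq_le_sq (by nlinarith) (by positivity)

lemma isCompact_setOf_domainGram_eq_one [∀ i, DecidableEq (D i)]
    [∀ j, DecidableEq (N j)] (hp : ∀ j, 0 < p j) :
    IsCompact {V : QuiverDatum D N 𝒜 | domainGram p V 1 = 1} := by
  let box : Set (QuiverDatum D N 𝒜) :=
    Set.univ.pi fun _ => Set.univ.pi fun j => Set.univ.pi fun _ => Set.univ.pi fun _ =>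
      Set.univ.pi fun _ => Set.Icc (-(1 + (p j)⁻¹)) (1 + (p j)⁻¹)
  have hbox : IsCompact box :=
    isCompact_univ_pi fun _ => isCompact_univ_pi fun _ => isCompact_univ_pi fun _ =>
      isCompact_univ_pi fun _ => isCompact_univ_pi fun _ => isCompact_Icc
  refine hbox.of_isClosed_subset (isClosed_eq (continuous_domainGram 1) continuous_const) ?_
  intro V hV i _ j _ a _ r _ c _
  exact abs_le.mp (abs_apply_le_of_domainGram_eq_one hp hV i j a r c)

variable [∀ i, Fintype (D i)]

lemma domainGram_baseChange (H : ∀ j, Matrix (N j) (N j) ℝ) (V : QuiverDatum D N 𝒜)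
    (G : ∀ i, Matrix (D i) (D i) ℝ) (Y : ∀ j, Matrix (N j) (N j) ℝ) (i : I) :
    domainGram p (baseChange H V G) Y i =
      (G i)ᵀ * domainGram p V (fun j => (H j)ᵀ * Y j * H j) i * G i := by
  simp only [domainGram, baseChange, transpose_mul, Matrix.mul_sum, Matrix.sum_mul,
    Matrix.mul_smul, Matrix.smul_mul, Matrix.mul_assoc]

lemma sum_trace_domainGram [Fintype I] (V : QuiverDatum D N 𝒜) (Y : ∀ j, Matrix (N j) (N j) ℝ) :
    ∑ i, (domainGram p V Y i).trace = ∑ j, p j * (Y j * codomainGram V j).trace := by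
  simp only [domainGram, codomainGram, trace_sum, trace_smul, smul_eq_mul, Finset.mul_sum]
  rw [Finset.sum_comm]
  refine Finset.sum_congr rfl fun j _ => Finset.sum_congr rfl fun i _ =>
    Finset.sum_congr rfl fun a _ => ?_
  rw [Matrix.mul_assoc, trace_mul_comm, Matrix.mul_assoc]

end Gram

section Intertwines

variable [∀ i, Fintype (D i)] [∀ j, Fintype (N j)]

/-- `(H, G)` is a morphism of quiver representations from `V` to `W`. -/
def Intertwines (H : ∀ j, Matrix (N j) (N j) ℝ) (G : ∀ i, Matrix (D i) (D i) ℝ)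
    (V W : QuiverDatum D N 𝒜) : Prop :=
  ∀ i j a, H j * V i j a = W i j a * G i

lemma isClosed_setOf_intertwines (V : QuiverDatum D N 𝒜) :
    IsClosed {x : QuiverDatum D N 𝒜 × (∀ j, Matrix (N j) (N j) ℝ) × ∀ i, Matrix (D i) (D i) ℝ |
      Intertwines x.2.1 x.2.2 V x.1} := by
  simp only [Intertwines, Set.ofPred_forall]
  exact isClosed_iInter fun i => isClosed_iInter fun j => isClosed_iInter fun a =>
    isClosed_eq (by fun_prop) (by fun_prop)

end Intertwines

section Capacity

variable [Fintype I] [Fintype J] [∀ i j, Fintype (𝒜 i j)] [∀ i, Fintype (D i)]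
  [∀ i, DecidableEq (D i)] [∀ j, Fintype (N j)] [∀ j, DecidableEq (N j)]

/-- The functional of `Y` whose infimum is the capacity. -/
noncomputable def capacityFunctional (p : J → ℝ) (V : QuiverDatum D N 𝒜)
    (Y : ∀ j, Matrix (N j) (N j) ℝ) : ℝ :=
  (∏ i, (domainGram p V Y i).det) / ∏ j, (Y j).det ^ p j

/-- The inequality `c ≤ cap(V, p)`, written without the division in the capacity functional. -/
def CapacityAtLeast (p : J → ℝ) (V : QuiverDatum D N 𝒜) (c : ℝ) : Prop :=
  ∀ Y : ∀ j, Matrix (N j) (N j) ℝ, (∀ j, (Y j).PosDef) →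
    c * ∏ j, (Y j).det ^ p j ≤ ∏ i, (domainGram p V Y i).det

/-- Feasibility, `cap(V, p) > 0`. -/
def Feasible (p : J → ℝ) (V : QuiverDatum D N 𝒜) : Prop :=
  ∃ c > 0, CapacityAtLeast p V c

variable {p : J → ℝ} {V : QuiverDatum D N 𝒜} {c : ℝ}

lemma prod_det_rpow_pos {Y : ∀ j, Matrix (N j) (N j) ℝ} (hY : ∀ j, (Y j).PosDef) :
    0 < ∏ j, (Y j).det ^ p j :=
  Finset.prod_pos fun j _ => Real.rpow_pos_of_pos (hY j).det_pos _

lemma capacityAtLeast_iff :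
    CapacityAtLeast p V c ↔ ∀ Y : ∀ j, Matrix (N j) (N j) ℝ, (∀ j, (Y j).PosDef) →
      c ≤ capacityFunctional p V Y :=
  forall₂_congr fun _ hY => (le_div_iff₀ (prod_det_rpow_pos hY)).symm

lemma CapacityAtLeast.domainGram_posDef (h : CapacityAtLeast p V c) (hc : 0 < c)
    (hp : ∀ j, 0 ≤ p j) {Y : ∀ j, Matrix (N j) (N j) ℝ} (hY : ∀ j, (Y j).PosDef) (i : I) :
    (domainGram p V Y i).PosDef := by
  have hprod : ∏ i, (domainGram p V Y i).det ≠ 0 :=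
    ((mul_pos hc (prod_det_rpow_pos hY)).trans_le (h Y hY)).ne'
  rw [(domainGram_posSemidef hp V (fun j => (hY j).posSemidef) i).posDef_iff_det_ne_zero]
  exact Finset.prod_ne_zero_iff.mp hprod i (Finset.mem_univ i)

lemma CapacityAtLeast.le_prod_det_domainGram_one (h : CapacityAtLeast p V c) :
    c ≤ ∏ i, (domainGram p V 1 i).det := by
  simpa using h 1 fun _ => PosDef.one

lemma CapacityAtLeast.mono {c' : ℝ} (h : CapacityAtLeast p V c) (hc : c' ≤ c) :
    CapacityAtLeast p V c' := fun Y hY =>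
  (mul_le_mul_of_nonneg_right hc (prod_det_rpow_pos hY).le).trans (h Y hY)

lemma CapacityAtLeast.of_tendsto {ι : Type*} {l : Filter ι} [l.NeBot]
    {V' : ι → QuiverDatum D N 𝒜} {c' : ι → ℝ} (hV : Tendsto V' l (𝓝 V)) (hc : Tendsto c' l (𝓝 c))
    (h : ∀ᶠ x in l, CapacityAtLeast p (V' x) (c' x)) : CapacityAtLeast p V c := by
  intro Y hY
  have hdet : Continuous fun U : QuiverDatum D N 𝒜 => ∏ i, (domainGram p U Y i).det :=
    continuous_finsetProd _ fun i _ =>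
      ((continuous_apply i).comp (continuous_domainGram Y)).matrix_det
  exact le_of_tendsto_of_tendsto (hc.mul_const _) ((hdet.tendsto V).comp hV)
    (h.mono fun x hx => hx Y hY)

lemma CapacityAtLeast.baseChange (h : CapacityAtLeast p V c) {H : ∀ j, Matrix (N j) (N j) ℝ}
    (hH : IsUnit H) (G : ∀ i, Matrix (D i) (D i) ℝ) :
    CapacityAtLeast p (baseChange H V G)
      (c * (∏ j, ((H j).det ^ 2) ^ p j) * ∏ i, (G i).det ^ 2) := by
  intro Y hY
  have hHY := h (fun j => (H j)ᵀ * Y j * H j) fun j =>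
    (IsUnit.posDef_star_left_conjugate_iff (Pi.isUnit_iff.mp hH j)).mpr (hY j)
  have hdetN : ∏ j, ((H j)ᵀ * Y j * H j).det ^ p j =
      (∏ j, ((H j).det ^ 2) ^ p j) * ∏ j, (Y j).det ^ p j := by
    rw [← Finset.prod_mul_distrib]
    refine Finset.prod_congr rfl fun j _ => ?_
    rw [← Real.mul_rpow (sq_nonneg _) (hY j).det_pos.le, det_mul, det_mul, det_transpose]
    ring_nf
  have hdetD : ∏ i, (domainGram p (QuiverDatum.baseChange H V G) Y i).det =
      (∏ i, (domainGram p V (fun j => (H j)ᵀ * Y j * H j) i).det) * ∏ i, (G i).det ^ 2 := by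
    rw [← Finset.prod_mul_distrib]
    refine Finset.prod_congr rfl fun i _ => ?_
    rw [domainGram_baseChange, det_mul, det_mul, det_transpose]
    ring
  rw [hdetN] at hHY
  calc c * (∏ j, ((H j).det ^ 2) ^ p j) * (∏ i, (G i).det ^ 2) * ∏ j, (Y j).det ^ p j
      = c * ((∏ j, ((H j).det ^ 2) ^ p j) * ∏ j, (Y j).det ^ p j) * ∏ i, (G i).det ^ 2 := by ring
    _ ≤ (∏ i, (domainGram p V (fun j => (H j)ᵀ * Y j * H j) i).det) * ∏ i, (G i).det ^ 2 :=
      mul_le_mul_of_nonneg_right hHY (by positivity)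
    _ = _ := hdetD.symm

lemma Feasible.baseChange (h : Feasible p V) {H : ∀ j, Matrix (N j) (N j) ℝ} (hH : IsUnit H)
    {G : ∀ i, Matrix (D i) (D i) ℝ} (hG : IsUnit G) : Feasible p (baseChange H V G) := by
  obtain ⟨c, hc, hV⟩ := h
  refine ⟨_, ?_, hV.baseChange hH G⟩
  have hdetH (j : J) : (H j).det ≠ 0 :=
    ((isUnit_iff_isUnit_det _).mp (Pi.isUnit_iff.mp hH j)).ne_zero
  have hdetG (i : I) : (G i).det ≠ 0 :=
    ((isUnit_iff_isUnit_det _).mp (Pi.isUnit_iff.mp hG i)).ne_zero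
  exact mul_pos
    (mul_pos hc (Finset.prod_pos fun j _ => Real.rpow_pos_of_pos (sq_pos_of_ne_zero (hdetH j)) _))
    (Finset.prod_pos fun i _ => sq_pos_of_ne_zero (hdetG i))

lemma geometric_of_capacityAtLeast_one (hp : ∀ j, 0 < p j) (hgram : domainGram p V 1 = 1)
    (hcap : CapacityAtLeast p V 1) : Geometric p V := by
  have hherm (j : J) : (codomainGram V j - 1).IsHermitian := by
    simp [IsHermitian, codomainGram, conjTranspose_eq_transpose_of_trivial, transpose_sum]
  set X : ∀ j, Matrix (N j) (N j) ℝ := fun j => codomainGram V j - 1 with hX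
  let gap : ℝ → ℝ := fun s => ∏ i, (domainGram p V (1 + s • X) i).det -
    ∏ j, ((1 + s • X) j).det ^ p j
  have hmin : IsLocalMin gap 0 := by
    filter_upwards [eventually_all.mpr fun j => eventually_posDef_one_add_smul (hherm j)] with s hs
    simpa [gap, hgram] using hcap (1 + s • X) hs
  have hderiv : HasDerivAt gap (∑ i, (domainGram p V X i).trace - ∑ j, p j * (X j).trace) 0 := by
    refine HasDerivAt.fun_sub ?_ (hasDerivAt_prod_det_one_add_smul_rpow p X)
    simpa [domainGram_add_smul, hgram] using
      hasDerivAt_prod_det_one_add_smul_rpow 1 (domainGram p V X)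
  have hzero : ∑ j, p j * ((X j)ᴴ * X j).trace = 0 := by
    have := hmin.hasDerivAt_eq_zero hderiv
    rw [sum_trace_domainGram, ← Finset.sum_sub_distrib] at this
    rw [← this]
    refine Finset.sum_congr rfl fun j _ => ?_
    rw [(hherm j).eq, ← mul_sub, ← trace_sub]
    simp [hX, mul_sub]
  have hX_zero (j : J) : X j = 0 := by
    have hnonneg (j : J) : 0 ≤ p j * ((X j)ᴴ * X j).trace :=
      mul_nonneg (hp j).le (posSemidef_conjTranspose_mul_self _).trace_nonneg
    have := (Finset.sum_eq_zero_iff_of_nonneg fun j _ => hnonneg j).mp hzero j (Finset.mem_univ j)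
    exact trace_conjTranspose_mul_self_eq_zero_iff.mp
      ((mul_eq_zero.mp this).resolve_left (hp j).ne')
  exact ⟨hgram, funext fun j => sub_eq_zero.mp (hX_zero j)⟩

lemma Feasible.exists_nearly_optimal (h : Feasible p V) {θ : ℝ} (hθ₀ : 0 ≤ θ) (hθ₁ : θ < 1) :
    ∃ Y : ∀ j, Matrix (N j) (N j) ℝ, (∀ j, (Y j).PosDef) ∧
      CapacityAtLeast p V (θ * capacityFunctional p V Y) := by
  obtain ⟨c, hc, hV⟩ := h
  rw [capacityAtLeast_iff] at hV
  let values : Set ℝ := {x | ∃ Y, (∀ j, (Y j).PosDef) ∧ capacityFunctional p V Y = x}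
  have hvalues : values.Nonempty := ⟨_, 1, fun _ => PosDef.one, rfl⟩
  have hlower : c ∈ lowerBounds values := by
    rintro _ ⟨Y, hY, rfl⟩
    exact hV Y hY
  have hInf : 0 < sInf values := hc.trans_le (le_csInf hvalues hlower)
  obtain ⟨_, ⟨Y, hY, rfl⟩, hlt⟩ := exists_lt_of_csInf_lt hvalues
    (show sInf values < sInf values * (2 - θ) by nlinarith)
  refine ⟨Y, hY, capacityAtLeast_iff.mpr fun Z hZ => ?_⟩
  calc θ * capacityFunctional p V Y ≤ θ * (sInf values * (2 - θ)) :=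
        mul_le_mul_of_nonneg_left hlt.le hθ₀
    _ ≤ sInf values := by nlinarith [mul_nonneg hInf.le (sq_nonneg (1 - θ))]
    _ ≤ capacityFunctional p V Z := csInf_le ⟨c, hlower⟩ ⟨Z, hZ, rfl⟩

lemma Feasible.exists_normalized (h : Feasible p V) (hp : ∀ j, 0 ≤ p j) {θ : ℝ} (hθ₀ : 0 ≤ θ)
    (hθ₁ : θ < 1) :
    ∃ (W : QuiverDatum D N 𝒜) (H : ∀ j, Matrix (N j) (N j) ℝ) (G : ∀ i, Matrix (D i) (D i) ℝ),
      IsUnit (H, G) ∧ Intertwines H G V W ∧ domainGram p W 1 = 1 ∧ CapacityAtLeast p W θ := by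
  obtain ⟨Y, hY, hcap⟩ := h.exists_nearly_optimal hθ₀ hθ₁
  obtain ⟨c, hc, hV⟩ := h
  have hgram := hV.domainGram_posDef hc hp hY
  choose H hH hHY using fun j => exists_isUnit_transpose_mul_self_eq (hY j)
  choose G hG hGY using fun i => exists_isUnit_transpose_mul_self_eq (hgram i)
  have hGdet (i : I) : IsUnit (G i).det := (isUnit_iff_isUnit_det _).mp (hG i)
  refine ⟨QuiverDatum.baseChange H V fun i => (G i)⁻¹, H, G,
    Prod.isUnit_iff.mpr ⟨Pi.isUnit_iff.mpr hH, Pi.isUnit_iff.mpr hG⟩, fun i j a => ?_,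
    funext fun i => ?_, ?_⟩
  · exact (nonsing_inv_mul_cancel_right _ _ (hGdet i)).symm
  · simp only [domainGram_baseChange, Pi.one_apply, Matrix.mul_one, hHY]
    rw [← hGY i, transpose_nonsing_inv, Matrix.mul_assoc, Matrix.mul_assoc,
      mul_nonsing_inv _ (hGdet i), Matrix.mul_one,
      nonsing_inv_mul _ (isUnit_det_transpose _ (hGdet i))]
  · convert hcap.baseChange (Pi.isUnit_iff.mpr hH) fun i => (G i)⁻¹ using 1
    have hdetN (j : J) : (H j).det ^ 2 = (Y j).det := by
      rw [← hHY j, det_mul, det_transpose, sq]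
    have hdetD (i : I) : (G i)⁻¹.det ^ 2 = ((domainGram p V Y i).det)⁻¹ := by
      rw [← hGY i, det_mul, det_transpose, det_nonsing_inv, Ring.inverse_eq_inv', ← sq, inv_pow]
    have hN := (prod_det_rpow_pos (p := p) hY).ne'
    have hD : ∏ i, (domainGram p V Y i).det ≠ 0 :=
      Finset.prod_ne_zero_iff.mpr fun i _ => (hgram i).det_pos.ne'
    simp only [hdetN, hdetD, capacityFunctional, Finset.prod_inv_distrib]
    field_simp

end Capacity

section Compactness

variable [Fintype I] [Fintype J] [∀ i j, Fintype (𝒜 i j)] [∀ i, Fintype (D i)]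
  [∀ i, DecidableEq (D i)] [∀ j, Fintype (N j)] [∀ j, DecidableEq (N j)] {p : J → ℝ}

lemma Feasible.exists_geometric_intertwiner {V : QuiverDatum D N 𝒜} (hV : Feasible p V)
    (hp : ∀ j, 0 < p j)
    [Nontrivial ((∀ j, Matrix (N j) (N j) ℝ) × ∀ i, Matrix (D i) (D i) ℝ)] :
    ∃ (W : QuiverDatum D N 𝒜) (H : ∀ j, Matrix (N j) (N j) ℝ) (G : ∀ i, Matrix (D i) (D i) ℝ),
      Geometric p W ∧ Feasible p W ∧ Intertwines H G V W ∧ (H, G) ≠ 0 := by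
  open scoped Matrix.Norms.Elementwise in
  let E := (∀ j, Matrix (N j) (N j) ℝ) × ∀ i, Matrix (D i) (D i) ℝ
  have : ProperSpace E := FiniteDimensional.proper_real E
  have : FirstCountableTopology (QuiverDatum D N 𝒜) :=
    inferInstanceAs (FirstCountableTopology (∀ i j, 𝒜 i j → N j → D i → ℝ))
  have hθ₁ (s : ℕ) : (s / (s + 1) : ℝ) < 1 := (div_lt_one (by positivity)).mpr (lt_add_one _)
  have hseq (s : ℕ) : ∃ W : QuiverDatum D N 𝒜, domainGram p W 1 = 1 ∧
      CapacityAtLeast p W (s / (s + 1)) ∧ ∃ φ : E, Intertwines φ.1 φ.2 V W ∧ ‖φ‖ = 1 := by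
    obtain ⟨W, H, G, hunit, hφ, hgram, hcap⟩ :=
      hV.exists_normalized (fun j => (hp j).le) (by positivity) (hθ₁ s)
    refine ⟨W, hgram, hcap, ‖((H, G) : E)‖⁻¹ • ((H, G) : E), fun i j a => ?_, ?_⟩
    · simpa using congrArg (‖((H, G) : E)‖⁻¹ • ·) (hφ i j a)
    · exact norm_smul_inv_norm (𝕜 := ℝ) hunit.ne_zero
  choose W hgram hcap φ hφ hnorm using hseq
  obtain ⟨⟨W', φ'⟩, ⟨hgram', hnorm'⟩, u, hu, hlim⟩ :=
    ((isCompact_setOf_domainGram_eq_one hp).prod (isCompact_sphere (0 : E) 1)).tendsto_subseq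
      (x := fun s => (W s, φ s)) fun s => ⟨hgram s, by simpa using hnorm s⟩
  have hW : Tendsto (fun s => W (u s)) atTop (𝓝 W') := (continuous_fst.tendsto _).comp hlim
  have hcap' : CapacityAtLeast p W' 1 := .of_tendsto hW
    ((tendsto_natCast_div_add_atTop (1 : ℝ)).comp hu.tendsto_atTop)
    (.of_forall fun s => hcap (u s))
  refine ⟨W', φ'.1, φ'.2, geometric_of_capacityAtLeast_one hp hgram' hcap', ⟨1, one_pos, hcap'⟩,
    (isClosed_setOf_intertwines V).mem_of_tendsto hlim (.of_forall fun s => hφ (u s)), ?_⟩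
  rintro h
  simp [show φ' = 0 from h] at hnorm'

end Compactness

section PowersOfT

lemma tendsto_zpow_mul_nhdsNE_zero {e : ℤ} {x : ℝ} (he : x ≠ 0 → 0 ≤ e) :
    Tendsto (fun t : ℝ => t ^ e * x) (𝓝[≠] 0) (𝓝 (if e = 0 then x else 0)) := by
  rcases eq_or_ne x 0 with rfl | hx
  · simp
  obtain ⟨q, rfl⟩ := Int.eq_ofNat_of_zero_le (he hx)
  have hcont : Continuous fun t : ℝ => t ^ q * x := by fun_prop
  simpa [zero_pow_eq] using (hcont.tendsto 0).mono_left nhdsWithin_le_nhds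

variable {n : Type*} [Fintype n] [DecidableEq n] {t : ℝ}

lemma isUnit_diagonal_zpow (ht : t ≠ 0) (e : n → ℤ) :
    IsUnit (diagonal fun r => t ^ e r) :=
  isUnit_diagonal.mpr (Pi.isUnit_iff.mpr fun r => (zpow_ne_zero (e r) ht).isUnit)

lemma sq_det_diagonal_zpow (ht : 0 < t) (e : n → ℤ) :
    (diagonal fun r => t ^ e r).det ^ 2 = t ^ (2 * ∑ r, (e r : ℝ)) := by
  simp only [det_diagonal, mul_comm (2 : ℝ), Real.rpow_mul ht.le, Real.rpow_two,
    Real.rpow_sum_of_pos ht, Real.rpow_intCast]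

end PowersOfT

section OneParameterSubgroups

variable {eN : ∀ j, N j → ℤ} {eD : ∀ i, D i → ℤ} {V : QuiverDatum D N 𝒜}

/-- Every nonzero entry of `V` has nonnegative weight under the one-parameter subgroup with
exponents `eN` and `eD`; equivalently, `t · V` converges as `t → 0`. -/
def HasNonnegWeights (eN : ∀ j, N j → ℤ) (eD : ∀ i, D i → ℤ) (V : QuiverDatum D N 𝒜) : Prop :=
  ∀ i j a r c, V i j a r c ≠ 0 → eD i c ≤ eN j r

/-- The part of `V` of weight zero under the one-parameter subgroup with exponents `eN` and `eD`. -/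
def weightZeroPart (eN : ∀ j, N j → ℤ) (eD : ∀ i, D i → ℤ) (V : QuiverDatum D N 𝒜) :
    QuiverDatum D N 𝒜 :=
  fun i j a => of fun r c => if eD i c = eN j r then V i j a r c else 0

lemma weightZeroPart_zero : weightZeroPart 0 0 V = V := by
  ext
  simp [weightZeroPart]

variable [∀ i, Fintype (D i)] [∀ j, Fintype (N j)]

/-- The pairing of the one-parameter subgroup `(eN, eD)` with the character of the base change group
that governs the capacity. -/
def weight [Fintype I] [Fintype J] (p : J → ℝ) (eN : ∀ j, N j → ℤ) (eD : ∀ i, D i → ℤ) : ℝ :=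
  ∑ j, p j * ∑ r, (eN j r : ℝ) - ∑ i, ∑ c, (eD i c : ℝ)

lemma weight_neg [Fintype I] [Fintype J] (p : J → ℝ) :
    weight p (-eN) (-eD) = -weight p eN eD := by
  simp [weight, neg_add_eq_sub]

variable [∀ i, DecidableEq (D i)] [∀ j, DecidableEq (N j)]

/-- The action on `V` of the point `t` of the one-parameter subgroup with exponents `eN`, `eD`. -/
noncomputable def torusAct (t : ℝ) (eN : ∀ j, N j → ℤ) (eD : ∀ i, D i → ℤ)
    (V : QuiverDatum D N 𝒜) : QuiverDatum D N 𝒜 :=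
  baseChange (fun j => diagonal fun r => t ^ eN j r) V fun i => diagonal fun c => t ^ (-eD i c)

lemma torusAct_apply {t : ℝ} (ht : t ≠ 0) (i : I) (j : J) (a : 𝒜 i j) (r : N j) (c : D i) :
    torusAct t eN eD V i j a r c = t ^ (eN j r - eD i c) * V i j a r c := by
  simp only [torusAct, baseChange, mul_diagonal, diagonal_mul, sub_eq_add_neg, zpow_add₀ ht]
  ring

lemma tendsto_torusAct (hV : HasNonnegWeights eN eD V) :
    Tendsto (fun t => torusAct t eN eD V) (𝓝[≠] 0) (𝓝 (weightZeroPart eN eD V)) := by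
  refine tendsto_pi_nhds.mpr fun i => tendsto_pi_nhds.mpr fun j => tendsto_pi_nhds.mpr fun a =>
    tendsto_pi_nhds.mpr fun r => tendsto_pi_nhds.mpr fun c => ?_
  have hentry := tendsto_zpow_mul_nhdsNE_zero fun hne => sub_nonneg.mpr (hV i j a r c hne)
  simp only [sub_eq_zero, eq_comm (a := eN j r)] at hentry
  refine hentry.congr' ?_
  filter_upwards [self_mem_nhdsWithin] with t ht
  exact (torusAct_apply ht i j a r c).symm

variable [Fintype I] [Fintype J] [∀ i j, Fintype (𝒜 i j)] {p : J → ℝ} {c : ℝ}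

lemma CapacityAtLeast.torusAct (h : CapacityAtLeast p V c) {t : ℝ} (ht : 0 < t) :
    CapacityAtLeast p (torusAct t eN eD V) (c * t ^ (2 * weight p eN eD)) := by
  unfold QuiverDatum.torusAct
  convert h.baseChange (Pi.isUnit_iff.mpr fun j => isUnit_diagonal_zpow ht.ne' (eN j))
    (fun i => diagonal fun c => t ^ (-eD i c)) using 1
  have hN : ∏ j, ((diagonal fun r => t ^ eN j r).det ^ 2) ^ p j =
      t ^ ∑ j, 2 * (∑ r, (eN j r : ℝ)) * p j := by
    simp only [Real.rpow_sum_of_pos ht, sq_det_diagonal_zpow ht, Real.rpow_mul ht.le]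
  have hD : ∏ i, (diagonal fun c => t ^ (-eD i c)).det ^ 2 =
      t ^ ∑ i, 2 * ∑ c, ((-eD i c : ℤ) : ℝ) := by
    rw [Real.rpow_sum_of_pos ht]
    exact Finset.prod_congr rfl fun i _ => sq_det_diagonal_zpow ht _
  rw [hN, hD, mul_assoc, ← Real.rpow_add ht]
  congr 2
  simp only [weight, mul_sub, Finset.mul_sum, Finset.sum_mul, Int.cast_neg, mul_neg,
    Finset.sum_neg_distrib, mul_right_comm (2 : ℝ), ← mul_assoc, ← sub_eq_add_neg]

lemma Feasible.weight_nonneg (hfeas : Feasible p V) (hV : HasNonnegWeights eN eD V) :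
    0 ≤ weight p eN eD := by
  obtain ⟨c, hc, hcap⟩ := hfeas
  by_contra! hneg
  have hatTop : Tendsto (fun t : ℝ => c * t ^ (2 * weight p eN eD)) (𝓝[>] 0) atTop :=
    (tendsto_rpow_neg_nhdsGT_zero (by linarith)).const_mul_atTop hc
  have hbig (K : ℝ) : CapacityAtLeast p (weightZeroPart eN eD V) K := by
    refine .of_tendsto ((tendsto_torusAct hV).mono_left (nhdsGT_le_nhdsNE 0)) tendsto_const_nhds ?_
    filter_upwards [hatTop.eventually_ge_atTop K, self_mem_nhdsWithin] with t hK ht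
    exact (hcap.torusAct ht).mono hK
  exact (lt_add_one _).not_ge (hbig _).le_prod_det_domainGram_one

lemma Feasible.weightZeroPart (hfeas : Feasible p V) (hV : HasNonnegWeights eN eD V)
    (hweight : weight p eN eD = 0) : Feasible p (weightZeroPart eN eD V) := by
  obtain ⟨c, hc, hcap⟩ := hfeas
  refine ⟨c, hc, .of_tendsto ((tendsto_torusAct hV).mono_left (nhdsGT_le_nhdsNE 0))
    tendsto_const_nhds ?_⟩
  filter_upwards [self_mem_nhdsWithin] with t ht
  simpa [hweight] using hcap.torusAct (eN := eN) (eD := eD) ht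

end OneParameterSubgroups

section Degeneration

variable [∀ i, Fintype (D i)] [∀ j, Fintype (N j)] {V : QuiverDatum D N 𝒜}

lemma baseChange_one_one [∀ i, DecidableEq (D i)] [∀ j, DecidableEq (N j)] :
    baseChange 1 V 1 = V := by
  ext
  simp [baseChange]

lemma baseChange_baseChange (H H' : ∀ j, Matrix (N j) (N j) ℝ) (G G' : ∀ i, Matrix (D i) (D i) ℝ) :
    baseChange H' (baseChange H V G) G' = baseChange (H' * H) V (G * G') := by
  funext i j a
  simp only [baseChange, Pi.mul_apply, Matrix.mul_assoc]

variable [Fintype I] [Fintype J] [∀ i j, Fintype (𝒜 i j)] [∀ i, DecidableEq (D i)]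
  [∀ j, DecidableEq (N j)] {p : J → ℝ}

/-- After a base change, a one-parameter subgroup of diagonal matrices carries `V` to a geometric
datum in the limit `t → 0`. -/
def DegeneratesToGeometric (p : J → ℝ) (V : QuiverDatum D N 𝒜) : Prop :=
  ∃ (H : ∀ j, Matrix (N j) (N j) ℝ) (G : ∀ i, Matrix (D i) (D i) ℝ) (eN : ∀ j, N j → ℤ)
    (eD : ∀ i, D i → ℤ), IsUnit H ∧ IsUnit G ∧ HasNonnegWeights eN eD (baseChange H V G) ∧
      Geometric p (weightZeroPart eN eD (baseChange H V G))

lemma Geometric.degeneratesToGeometric (hV : Geometric p V) : DegeneratesToGeometric p V :=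
  ⟨1, 1, 0, 0, isUnit_one, isUnit_one, fun _ _ _ _ _ _ => le_rfl,
    by rwa [baseChange_one_one, weightZeroPart_zero]⟩

lemma DegeneratesToGeometric.of_baseChange {H : ∀ j, Matrix (N j) (N j) ℝ}
    {G : ∀ i, Matrix (D i) (D i) ℝ} (hH : IsUnit H) (hG : IsUnit G)
    (h : DegeneratesToGeometric p (baseChange H V G)) : DegeneratesToGeometric p V := by
  obtain ⟨H', G', eN, eD, hH', hG', hweights, hgeom⟩ := h
  rw [baseChange_baseChange] at hweights hgeom
  exact ⟨_, _, eN, eD, hH'.mul hH, hG.mul hG', hweights, hgeom⟩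

end Degeneration

section Reindex

variable {D' : I → Type*} {N' : J → Type*}

/-- The datum obtained from `V` by reindexing the coordinates at every vertex. -/
def reindex (V : QuiverDatum D N 𝒜) (e : ∀ j, N' j ≃ N j) (f : ∀ i, D' i ≃ D i) :
    QuiverDatum D' N' 𝒜 :=
  fun i j a => (V i j a).submatrix (e j) (f i)

variable {V : QuiverDatum D N 𝒜} (e : ∀ j, N' j ≃ N j) (f : ∀ i, D' i ≃ D i)

lemma codomainGram_reindex [Fintype I] [∀ i j, Fintype (𝒜 i j)] [∀ i, Fintype (D i)]
    [∀ i, Fintype (D' i)] (j : J) :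
    codomainGram (reindex V e f) j = (codomainGram V j).submatrix (e j) (e j) := by
  simp only [codomainGram, reindex, transpose_submatrix, submatrix_mul_equiv]
  ext
  simp [Matrix.sum_apply]

variable [Fintype J] [∀ i j, Fintype (𝒜 i j)] [∀ j, Fintype (N j)] [∀ j, Fintype (N' j)]
  {p : J → ℝ}

lemma domainGram_reindex (Y : ∀ j, Matrix (N j) (N j) ℝ) (i : I) :
    domainGram p (reindex V e f) (fun j => (Y j).submatrix (e j) (e j)) i =
      (domainGram p V Y i).submatrix (f i) (f i) := by
  simp only [domainGram, reindex, transpose_submatrix, submatrix_mul_equiv]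
  ext
  simp [Matrix.sum_apply]

variable [Fintype I] [∀ i, Fintype (D i)] [∀ i, Fintype (D' i)]
  [∀ i, DecidableEq (D i)] [∀ i, DecidableEq (D' i)] [∀ j, DecidableEq (N j)]
  [∀ j, DecidableEq (N' j)]

lemma Geometric.reindex (hV : Geometric p V) : Geometric p (reindex V e f) := by
  refine ⟨funext fun i => ?_, funext fun j => ?_⟩
  · simpa [hV.1, ← Pi.one_def] using domainGram_reindex (p := p) (V := V) e f 1 i
  · simp [codomainGram_reindex, hV.2]

lemma Feasible.reindex (hV : Feasible p V) : Feasible p (reindex V e f) := by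
  obtain ⟨c, hc, hcap⟩ := hV
  refine ⟨c, hc, fun Y hY => ?_⟩
  have hY' : Y = fun j => ((Y j).submatrix (e j).symm (e j).symm).submatrix (e j) (e j) := by
    simp
  rw [hY']
  simp only [domainGram_reindex, det_submatrix_equiv_self]
  simpa using hcap _ fun j => (hY j).submatrix (e j).symm.injective

lemma DegeneratesToGeometric.reindex (hV : DegeneratesToGeometric p V) :
    DegeneratesToGeometric p (reindex V e f) := by
  obtain ⟨H, G, eN, eD, hH, hG, hweights, hgeom⟩ := hV
  have hbase : baseChange (fun j => (H j).submatrix (e j) (e j)) (QuiverDatum.reindex V e f)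
      (fun i => (G i).submatrix (f i) (f i)) =
        QuiverDatum.reindex (baseChange H V G) e f := by
    funext i j a
    simp only [baseChange, QuiverDatum.reindex, submatrix_mul_equiv]
  refine ⟨fun j => (H j).submatrix (e j) (e j), fun i => (G i).submatrix (f i) (f i),
    fun j r => eN j (e j r), fun i c => eD i (f i c), ?_, ?_, ?_, ?_⟩
  · exact Pi.isUnit_iff.mpr fun j => (isUnit_submatrix_equiv _ _).mpr (Pi.isUnit_iff.mp hH j)
  · exact Pi.isUnit_iff.mpr fun i => (isUnit_submatrix_equiv _ _).mpr (Pi.isUnit_iff.mp hG i)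
  · exact hbase ▸ fun i j a r c => hweights i j a (e j r) (f i c)
  · exact hbase ▸ hgeom.reindex e f

end Reindex

section Blocks

variable {D₁ D₂ : I → Type*} {N₁ N₂ : J → Type*}

/-- The block upper triangular datum with diagonal blocks `S`, `Q` and upper right block `R`. -/
def blockTriangular (S : QuiverDatum D₁ N₁ 𝒜) (R : QuiverDatum D₂ N₁ 𝒜) (Q : QuiverDatum D₂ N₂ 𝒜) :
    QuiverDatum (fun i => D₁ i ⊕ D₂ i) (fun j => N₁ j ⊕ N₂ j) 𝒜 :=
  fun i j a => fromBlocks (S i j a) (R i j a) 0 (Q i j a)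

variable {S : QuiverDatum D₁ N₁ 𝒜} {R : QuiverDatum D₂ N₁ 𝒜} {Q : QuiverDatum D₂ N₂ 𝒜}

lemma baseChange_blockTriangular [∀ i, Fintype (D₁ i)] [∀ i, Fintype (D₂ i)]
    [∀ j, Fintype (N₁ j)] [∀ j, Fintype (N₂ j)] (H₁ : ∀ j, Matrix (N₁ j) (N₁ j) ℝ)
    (H₂ : ∀ j, Matrix (N₂ j) (N₂ j) ℝ) (G₁ : ∀ i, Matrix (D₁ i) (D₁ i) ℝ)
    (G₂ : ∀ i, Matrix (D₂ i) (D₂ i) ℝ) :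
    baseChange (fun j => fromBlocks (H₁ j) 0 0 (H₂ j)) (blockTriangular S R Q)
        (fun i => fromBlocks (G₁ i) 0 0 (G₂ i)) =
      blockTriangular (baseChange H₁ S G₁) (fun i j a => H₁ j * R i j a * G₂ i)
        (baseChange H₂ Q G₂) := by
  funext i j a
  simp [baseChange, blockTriangular, fromBlocks_multiply]

lemma codomainGram_blockTriangular_zero [Fintype I] [∀ i j, Fintype (𝒜 i j)]
    [∀ i, Fintype (D₁ i)] [∀ i, Fintype (D₂ i)] (j : J) :
    codomainGram (blockTriangular S 0 Q) j =
      fromBlocks (codomainGram S j) 0 0 (codomainGram Q j) := by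
  simp only [codomainGram, blockTriangular, fromBlocks_transpose, fromBlocks_multiply]
  ext (_ | _) (_ | _) <;> simp [Matrix.sum_apply]

variable [Fintype J] [∀ i j, Fintype (𝒜 i j)] [∀ j, Fintype (N₁ j)] [∀ j, Fintype (N₂ j)]
  {p : J → ℝ}

lemma domainGram_blockTriangular_zero (Y : ∀ j, Matrix (N₁ j) (N₁ j) ℝ)
    (Z : ∀ j, Matrix (N₂ j) (N₂ j) ℝ) (i : I) :
    domainGram p (blockTriangular S 0 Q) (fun j => fromBlocks (Y j) 0 0 (Z j)) i =
      fromBlocks (domainGram p S Y i) 0 0 (domainGram p Q Z i) := by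
  simp only [domainGram, blockTriangular, fromBlocks_transpose, fromBlocks_multiply]
  ext (_ | _) (_ | _) <;> simp [Matrix.sum_apply]

variable [Fintype I] [∀ i, Fintype (D₁ i)] [∀ i, Fintype (D₂ i)] [∀ i, DecidableEq (D₁ i)]
  [∀ i, DecidableEq (D₂ i)] [∀ j, DecidableEq (N₁ j)] [∀ j, DecidableEq (N₂ j)]

lemma Geometric.blockTriangular_zero (hS : Geometric p S) (hQ : Geometric p Q) :
    Geometric p (blockTriangular S 0 Q) := by
  refine ⟨funext fun i => ?_, funext fun j => ?_⟩
  · have := domainGram_blockTriangular_zero (p := p) (S := S) (Q := Q) 1 1 i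
    simpa [hS.1, hQ.1, ← Pi.one_def] using this
  · simp [codomainGram_blockTriangular_zero, hS.2, hQ.2]

lemma Feasible.of_blockTriangular_zero (h : Feasible p (blockTriangular S 0 Q))
    (hp : ∀ j, 0 ≤ p j) : Feasible p S := by
  obtain ⟨c, hc, hcap⟩ := h
  set detQ := ∏ i, (domainGram p Q 1 i).det
  have hblock (Y : ∀ j, Matrix (N₁ j) (N₁ j) ℝ) (hY : ∀ j, (Y j).PosDef) :
      c * ∏ j, (Y j).det ^ p j ≤ (∏ i, (domainGram p S Y i).det) * detQ := by
    have hYone := hcap (fun j => fromBlocks (Y j) 0 0 (1 : Matrix (N₂ j) (N₂ j) ℝ))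
      fun j => posDef_fromBlocks_zero (hY j) PosDef.one
    simp only [domainGram_blockTriangular_zero, det_fromBlocks_zero₂₁, Finset.prod_mul_distrib,
      det_one, mul_one] at hYone
    exact hYone
  have hdetQ_nonneg : 0 ≤ detQ := Finset.prod_nonneg fun i _ =>
    (domainGram_posSemidef hp Q (fun _ => PosSemidef.one) i).det_nonneg
  have hdetQ_pos : 0 < detQ := hdetQ_nonneg.lt_of_ne fun hzero => by
    simpa [← hzero, hc.not_ge] using hblock 1 fun _ => PosDef.one
  exact ⟨c / detQ, div_pos hc hdetQ_pos, fun Y hY => by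
    rw [div_mul_eq_mul_div, div_le_iff₀ hdetQ_pos]
    exact hblock Y hY⟩

lemma DegeneratesToGeometric.blockTriangular (hS : DegeneratesToGeometric p S)
    (hQ : DegeneratesToGeometric p Q) (R : QuiverDatum D₂ N₁ 𝒜) :
    DegeneratesToGeometric p (blockTriangular S R Q) := by
  obtain ⟨H₁, G₁, eN₁, eD₁, hH₁, hG₁, hweights₁, hgeom₁⟩ := hS
  obtain ⟨H₂, G₂, eN₂, eD₂, hH₂, hG₂, hweights₂, hgeom₂⟩ := hQ
  obtain ⟨K, hK⟩ : ∃ K : ℤ, ∀ i j c r, eD₂ i c < eN₁ j r + K := by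
    obtain ⟨K, hK⟩ := (Set.finite_range fun x : ((Σ i, D₂ i) × Σ j, N₁ j) =>
      eD₂ x.1.1 x.1.2 - eN₁ x.2.1 x.2.2).bddAbove
    refine ⟨K + 1, fun i j c r => ?_⟩
    have := hK ⟨(⟨i, c⟩, ⟨j, r⟩), rfl⟩
    dsimp only at this
    linarith
  refine ⟨fun j => fromBlocks (H₁ j) 0 0 (H₂ j), fun i => fromBlocks (G₁ i) 0 0 (G₂ i),
    fun j => Sum.elim (fun r => eN₁ j r + K) (eN₂ j),
    fun i => Sum.elim (fun c => eD₁ i c + K) (eD₂ i), ?_, ?_, ?_, ?_⟩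
  · exact Pi.isUnit_iff.mpr fun j =>
      isUnit_fromBlocks_zero₂₁.mpr ⟨Pi.isUnit_iff.mp hH₁ j, Pi.isUnit_iff.mp hH₂ j⟩
  · exact Pi.isUnit_iff.mpr fun i =>
      isUnit_fromBlocks_zero₂₁.mpr ⟨Pi.isUnit_iff.mp hG₁ i, Pi.isUnit_iff.mp hG₂ i⟩
  · rw [baseChange_blockTriangular]
    rintro i j a (r | r) (c | c) hne
    · simpa using hweights₁ i j a r c hne
    · exact (hK i j c r).le
    · exact absurd rfl hne
    · exact hweights₂ i j a r c hne
  · convert hgeom₁.blockTriangular_zero hgeom₂ using 1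
    rw [baseChange_blockTriangular]
    funext i j a
    ext (r | r) (c | c)
    · simp [weightZeroPart, QuiverDatum.blockTriangular]
    · simp [weightZeroPart, QuiverDatum.blockTriangular, (hK i j c r).ne]
    · exact ite_self _
    · rfl

end Blocks

section Restrict

/-- The datum induced by `V` between the coordinate subspaces cut out by `sD` and `sN`. -/
def restrict (sN : ∀ j, N j → Prop) (sD : ∀ i, D i → Prop) (V : QuiverDatum D N 𝒜) :
    QuiverDatum (fun i => {c // sD i c}) (fun j => {r // sN j r}) 𝒜 :=
  fun i j a => (V i j a).toBlock (sN j) (sD i)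

variable {sN : ∀ j, N j → Prop} {sD : ∀ i, D i → Prop} [∀ j, DecidablePred (sN j)]
  [∀ i, DecidablePred (sD i)] {V : QuiverDatum D N 𝒜}

lemma reindex_sumCompl (hV : ∀ i j a r c, V i j a r c ≠ 0 → sD i c → sN j r) :
    reindex V (fun j => Equiv.sumCompl (sN j)) (fun i => Equiv.sumCompl (sD i)) =
      blockTriangular (restrict sN sD V) (fun i j a => (V i j a).toBlock (sN j) fun c => ¬sD i c)
        (restrict (fun j r => ¬sN j r) (fun i c => ¬sD i c) V) := by
  funext i j a
  ext (r | r) (c | c)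
  · rfl
  · rfl
  · by_contra hne
    exact r.2 (hV i j a r c hne c.2)
  · rfl

variable [Fintype I] [Fintype J] [∀ i, Fintype (D i)] [∀ j, Fintype (N j)]

lemma card_sigma_sum_sigma_subtype_lt (hs : (∃ j r, ¬sN j r) ∨ ∃ i c, ¬sD i c) :
    Fintype.card ((Σ i, {c // sD i c}) ⊕ Σ j, {r // sN j r}) <
      Fintype.card ((Σ i, D i) ⊕ Σ j, N j) := by
  refine Fintype.card_lt_of_injective_not_surjective
    (Sum.map (Sigma.map id fun _ => Subtype.val) (Sigma.map id fun _ => Subtype.val))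
    (Sum.map_injective.mpr ⟨.sigma_map Function.injective_id fun _ => Subtype.val_injective,
      .sigma_map Function.injective_id fun _ => Subtype.val_injective⟩) fun hsurj => ?_
  rcases hs with ⟨j, r, hr⟩ | ⟨i, c, hc⟩
  · obtain ⟨_ | ⟨_, r', hr'⟩, ⟨⟩⟩ := hsurj (.inr ⟨j, r⟩)
    exact hr hr'
  · obtain ⟨⟨_, c', hc'⟩ | _, ⟨⟩⟩ := hsurj (.inl ⟨i, c⟩)
    exact hc hc'

variable [∀ i j, Fintype (𝒜 i j)] [∀ i, DecidableEq (D i)] [∀ j, DecidableEq (N j)] {p : J → ℝ}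

lemma Feasible.restrict (h : Feasible p V) (hp : ∀ j, 0 ≤ p j)
    (hV : ∀ i j a r c, V i j a r c ≠ 0 → (sN j r ↔ sD i c)) : Feasible p (restrict sN sD V) := by
  have hblock := h.reindex (fun j => Equiv.sumCompl (sN j)) fun i => Equiv.sumCompl (sD i)
  have hzero : (fun i j a => (V i j a).toBlock (sN j) fun c => ¬sD i c) =
      (0 : QuiverDatum _ _ 𝒜) := by
    funext i j a
    ext r c
    by_contra hne
    exact c.2 ((hV i j a r c hne).mp r.2)
  rw [reindex_sumCompl fun i j a r c hne => (hV i j a r c hne).mpr, hzero] at hblock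
  exact hblock.of_blockTriangular_zero hp

lemma DegeneratesToGeometric.of_restrict (hV : ∀ i j a r c, V i j a r c ≠ 0 → sD i c → sN j r)
    (hs : DegeneratesToGeometric p (QuiverDatum.restrict sN sD V))
    (hs' : DegeneratesToGeometric p
      (QuiverDatum.restrict (fun j r => ¬sN j r) (fun i c => ¬sD i c) V)) :
    DegeneratesToGeometric p V := by
  have hblock := hs.blockTriangular hs' fun i j a => (V i j a).toBlock (sN j) fun c => ¬sD i c
  rw [← reindex_sumCompl hV] at hblock
  convert hblock.reindex (fun j => (Equiv.sumCompl (sN j)).symm)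
    fun i => (Equiv.sumCompl (sD i)).symm
  funext i j a
  simp [QuiverDatum.reindex]

end Restrict

section Splitting

variable [∀ i, Fintype (D i)] [∀ i, DecidableEq (D i)] [∀ j, Fintype (N j)]
  {V W : QuiverDatum D N 𝒜}

section Intertwiner

variable {H : ∀ j, Matrix (N j) (N j) ℝ} {G : ∀ i, Matrix (D i) (D i) ℝ}

lemma Intertwines.baseChange_eq (h : Intertwines H G V W) (hG : IsUnit G) :
    baseChange H V (fun i => (G i)⁻¹) = W := by
  funext i j a
  rw [baseChange, h, mul_nonsing_inv_cancel_right _ _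
    ((isUnit_iff_isUnit_det _).mp (Pi.isUnit_iff.mp hG i))]

variable [∀ j, DecidableEq (N j)]

lemma Intertwines.exists_diagonal (h : Intertwines H G V W) :
    ∃ (P Q : ((∀ j, Matrix (N j) (N j) ℝ) × ∀ i, Matrix (D i) (D i) ℝ)ˣ) (δN : ∀ j, N j → ℝ)
      (δD : ∀ i, D i → ℝ),
      (H, G) = P.1 * (fun j => diagonal (δN j), fun i => diagonal (δD i)) * Q.1 ∧
        Intertwines (fun j => diagonal (δN j)) (fun i => diagonal (δD i))
          (baseChange Q.1.1 V Q⁻¹.1.2) (baseChange P⁻¹.1.1 W P.1.2) := by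
  choose PN QN δN hH using fun j => exists_eq_units_mul_diagonal_mul (H j)
  choose PD QD δD hG using fun i => exists_eq_units_mul_diagonal_mul (G i)
  refine ⟨MulEquiv.prodUnits.symm (MulEquiv.piUnits.symm PN, MulEquiv.piUnits.symm PD),
    MulEquiv.prodUnits.symm (MulEquiv.piUnits.symm QN, MulEquiv.piUnits.symm QD), δN, δD,
    Prod.ext (funext hH) (funext hG), fun i j a => ?_⟩
  calc diagonal (δN j) * ((QN j).1 * V i j a * (QD i)⁻¹.1)
      = (PN j)⁻¹.1 * ((PN j).1 * diagonal (δN j) * (QN j).1 * V i j a) * (QD i)⁻¹.1 := by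
        simp [Matrix.mul_assoc]
    _ = (PN j)⁻¹.1 * (W i j a * ((PD i).1 * diagonal (δD i) * (QD i).1)) * (QD i)⁻¹.1 := by
        rw [← hH, ← hG, h]
    _ = (PN j)⁻¹.1 * W i j a * (PD i).1 * diagonal (δD i) := by
        simp [Matrix.mul_assoc]

end Intertwiner

variable [∀ j, DecidableEq (N j)] {δN : ∀ j, N j → ℝ} {δD : ∀ i, D i → ℝ}

lemma Intertwines.diagonal_apply
    (h : Intertwines (fun j => diagonal (δN j)) (fun i => diagonal (δD i)) V W) (i : I) (j : J)
    (a : 𝒜 i j) (r : N j) (c : D i) : δN j r * V i j a r c = W i j a r c * δD i c := by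
  simpa using congrFun₂ (h i j a) r c

lemma Intertwines.eq_zero_of_source_ne_zero
    (h : Intertwines (fun j => diagonal (δN j)) (fun i => diagonal (δD i)) V W) (i : I) (j : J)
    (a : 𝒜 i j) (r : N j) (c : D i) (hV : V i j a r c ≠ 0) (hD : δD i c = 0) : δN j r = 0 :=
  (mul_eq_zero.mp (by rw [h.diagonal_apply, hD, mul_zero])).resolve_right hV

lemma Intertwines.eq_zero_of_target_ne_zero
    (h : Intertwines (fun j => diagonal (δN j)) (fun i => diagonal (δD i)) V W) (i : I) (j : J)
    (a : 𝒜 i j) (r : N j) (c : D i) (hW : W i j a r c ≠ 0) (hN : δN j r = 0) : δD i c = 0 :=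
  (mul_eq_zero.mp (by rw [← h.diagonal_apply, hN, zero_mul])).resolve_left hW

/-- The exponents of the one-parameter subgroup that scales the kernel of `diagonal (δ x)` by `t`
at every vertex `x`, and fixes the other coordinates. -/
noncomputable def kernelExponent {X : Type*} {B : X → Type*} (δ : ∀ x, B x → ℝ) (x : X) (b : B x) :
    ℤ :=
  if δ x b = 0 then 1 else 0

lemma kernelExponent_le_kernelExponent {X Y : Type*} {B : X → Type*} {C : Y → Type*}
    {δ : ∀ x, B x → ℝ} {ε : ∀ y, C y → ℝ} {x : X} {b : B x} {y : Y} {c : C y} :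
    kernelExponent δ x b ≤ kernelExponent ε y c ↔ (δ x b = 0 → ε y c = 0) := by
  unfold kernelExponent
  split_ifs <;> simp_all

lemma Intertwines.hasNonnegWeights_kernelExponent
    (h : Intertwines (fun j => diagonal (δN j)) (fun i => diagonal (δD i)) V W) :
    HasNonnegWeights (kernelExponent δN) (kernelExponent δD) V :=
  fun i j a r c hne => kernelExponent_le_kernelExponent.mpr
    (h.eq_zero_of_source_ne_zero i j a r c hne)

lemma Intertwines.hasNonnegWeights_neg_kernelExponent
    (h : Intertwines (fun j => diagonal (δN j)) (fun i => diagonal (δD i)) V W) :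
    HasNonnegWeights (-kernelExponent δN) (-kernelExponent δD) W :=
  fun i j a r c hne => neg_le_neg (kernelExponent_le_kernelExponent.mpr
    (h.eq_zero_of_target_ne_zero i j a r c hne))

variable [Fintype I] [Fintype J] [∀ i j, Fintype (𝒜 i j)] {p : J → ℝ}

-- The kernel of an intertwiner is a subrepresentation of `V` and its image one of `W`, so
-- feasibility of `V` and `W` bounds the weight of the same one-parameter subgroup from both sides.
lemma Feasible.weight_kernelExponent_eq_zero (hV : Feasible p V) (hW : Feasible p W)
    (h : Intertwines (fun j => diagonal (δN j)) (fun i => diagonal (δD i)) V W) :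
    weight p (kernelExponent δN) (kernelExponent δD) = 0 := by
  have hVpos := hV.weight_nonneg h.hasNonnegWeights_kernelExponent
  have hWpos := hW.weight_nonneg h.hasNonnegWeights_neg_kernelExponent
  rw [weight_neg] at hWpos
  linarith

lemma Feasible.restrict_kernel (hV : Feasible p V) (hW : Feasible p W) (hp : ∀ j, 0 ≤ p j)
    (h : Intertwines (fun j => diagonal (δN j)) (fun i => diagonal (δD i)) V W) :
    Feasible p (QuiverDatum.restrict (fun j r => δN j r = 0) (fun i c => δD i c = 0) V) ∧
      Feasible p (QuiverDatum.restrict (fun j r => ¬δN j r = 0) (fun i c => ¬δD i c = 0) V) := by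
  have hsplit := hV.weightZeroPart h.hasNonnegWeights_kernelExponent
    (hV.weight_kernelExponent_eq_zero hW h)
  have hweights : ∀ i j a r c, QuiverDatum.weightZeroPart (kernelExponent δN) (kernelExponent δD) V
      i j a r c ≠ 0 → (δN j r = 0 ↔ δD i c = 0) := fun i j a r c hne => by
    by_contra hiff
    by_cases hN : δN j r = 0 <;> simp_all [QuiverDatum.weightZeroPart, kernelExponent]
  constructor
  · convert hsplit.restrict hp hweights using 1
    funext i j a
    ext r c
    simp [QuiverDatum.restrict, QuiverDatum.weightZeroPart, kernelExponent, r.2, c.2]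
  · convert hsplit.restrict hp fun i j a r c hne => not_congr (hweights i j a r c hne) using 1
    funext i j a
    ext r c
    simp [QuiverDatum.restrict, QuiverDatum.weightZeroPart, kernelExponent, r.2, c.2]

end Splitting

section Existence

variable [∀ i, DecidableEq (D i)] [∀ j, DecidableEq (N j)] {δN : ∀ j, N j → ℝ}
  {δD : ∀ i, D i → ℝ}

lemma exists_ne_zero_of_diagonal_ne_zero
    (h : ((fun j => diagonal (δN j), fun i => diagonal (δD i)) :
      (∀ j, Matrix (N j) (N j) ℝ) × ∀ i, Matrix (D i) (D i) ℝ) ≠ 0) :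
    (∃ j r, δN j r ≠ 0) ∨ ∃ i c, δD i c ≠ 0 := by
  contrapose! h
  ext <;> simp [Matrix.diagonal_apply, h]

variable [∀ i, Fintype (D i)] [∀ j, Fintype (N j)]

lemma exists_eq_zero_of_not_isUnit_diagonal
    (h : ¬IsUnit ((fun j => diagonal (δN j), fun i => diagonal (δD i)) :
      (∀ j, Matrix (N j) (N j) ℝ) × ∀ i, Matrix (D i) (D i) ℝ)) :
    (∃ j r, δN j r = 0) ∨ ∃ i c, δD i c = 0 := by
  simpa only [Prod.isUnit_iff, Pi.isUnit_iff, isUnit_diagonal, isUnit_iff_ne_zero, not_and_or,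
    not_forall, not_not] using h

variable [Fintype I] [Fintype J] [∀ i j, Fintype (𝒜 i j)] {p : J → ℝ}

lemma Geometric.of_subsingleton
    [Subsingleton ((∀ j, Matrix (N j) (N j) ℝ) × ∀ i, Matrix (D i) (D i) ℝ)]
    (V : QuiverDatum D N 𝒜) : Geometric p V :=
  (Prod.ext_iff.mp (Subsingleton.elim
    ((codomainGram V, domainGram p V 1) : (∀ j, Matrix (N j) (N j) ℝ) × ∀ i, Matrix (D i) (D i) ℝ)
    1)).symm

theorem Feasible.degeneratesToGeometric {D : I → Type*} {N : J → Type*} [∀ i, Fintype (D i)]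
    [∀ i, DecidableEq (D i)] [∀ j, Fintype (N j)] [∀ j, DecidableEq (N j)]
    {V : QuiverDatum D N 𝒜} (hV : Feasible p V) (hp : ∀ j, 0 < p j) :
    DegeneratesToGeometric p V := by
  induction hcard : Fintype.card ((Σ i, D i) ⊕ Σ j, N j) using Nat.strong_induction_on
    generalizing D N with | _ s ih
  subst hcard
  cases subsingleton_or_nontrivial ((∀ j, Matrix (N j) (N j) ℝ) × ∀ i, Matrix (D i) (D i) ℝ)
  · exact (Geometric.of_subsingleton V).degeneratesToGeometric
  obtain ⟨W, H, G, hWgeom, hW, hφ, hφ_ne⟩ := hV.exists_geometric_intertwiner hp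
  by_cases hunit : IsUnit (H, G)
  · obtain ⟨hH, hG⟩ := Prod.isUnit_iff.mp hunit
    refine .of_baseChange (G := fun i => (G i)⁻¹) hH (Pi.isUnit_iff.mpr fun i =>
      isUnit_nonsing_inv_iff.mpr (Pi.isUnit_iff.mp hG i)) ?_
    exact hφ.baseChange_eq hG ▸ hWgeom.degeneratesToGeometric
  obtain ⟨P, Q, δN, δD, hdiag, hδ⟩ := hφ.exists_diagonal
  obtain ⟨⟨hP₁, hP₂⟩, hQ₁, hQ₂⟩ :
      (IsUnit P⁻¹.1.1 ∧ IsUnit P.1.2) ∧ IsUnit Q.1.1 ∧ IsUnit Q⁻¹.1.2 :=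
    ⟨⟨P⁻¹.isUnit.map (RingHom.fst _ _), P.isUnit.map (RingHom.snd _ _)⟩,
      Q.isUnit.map (RingHom.fst _ _), Q⁻¹.isUnit.map (RingHom.snd _ _)⟩
  have hzero : (∃ j r, δN j r = 0) ∨ ∃ i c, δD i c = 0 := by
    rw [hdiag, Units.isUnit_mul_units, Units.isUnit_units_mul] at hunit
    exact exists_eq_zero_of_not_isUnit_diagonal hunit
  have hne : (∃ j r, δN j r ≠ 0) ∨ ∃ i c, δD i c ≠ 0 :=
    exists_ne_zero_of_diagonal_ne_zero fun h => hφ_ne (by simp [hdiag, h])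
  obtain ⟨hker, hcoker⟩ :=
    (hV.baseChange hQ₁ hQ₂).restrict_kernel (hW.baseChange hP₁ hP₂) (fun j => (hp j).le) hδ
  exact .of_baseChange hQ₁ hQ₂ (.of_restrict hδ.eq_zero_of_source_ne_zero
    (ih _ (card_sigma_sum_sigma_subtype_lt hne) hker rfl)
    (ih _ (card_sigma_sum_sigma_subtype_lt (by simpa only [not_not] using hzero)) hcoker rfl))

end Existence

section Limits

variable [∀ i, Fintype (D i)] [∀ j, Fintype (N j)]

lemma eventually_sqrt_sum_sq_sub_lt [Fintype I] [Fintype J] [∀ i j, Fintype (𝒜 i j)] {ι : Type*}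
    {l : Filter ι} {U : ι → QuiverDatum D N 𝒜} {W : QuiverDatum D N 𝒜} (hU : Tendsto U l (𝓝 W))
    {ε : ℝ} (hε : 0 < ε) :
    ∀ᶠ x in l, √(∑ i, ∑ j, ∑ a, ∑ r, ∑ c, (U x i j a r c - W i j a r c) ^ 2) < ε := by
  have hcont : Continuous fun U : QuiverDatum D N 𝒜 =>
      √(∑ i, ∑ j, ∑ a, ∑ r, ∑ c, (U i j a r c - W i j a r c) ^ 2) := by
    fun_prop
  exact ((hcont.tendsto W).comp hU).eventually_lt_const (by simpa using hε)

variable [∀ i, DecidableEq (D i)] [∀ j, DecidableEq (N j)]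

lemma torusAct_baseChange {t : ℝ} (ht : t ≠ 0) (eN : ∀ j, N j → ℤ) (eD : ∀ i, D i → ℤ)
    (H : ∀ j, Matrix (N j) (N j) ℝ) (V : QuiverDatum D N 𝒜) {G : ∀ i, Matrix (D i) (D i) ℝ}
    (hG : IsUnit G) (i : I) (j : J) (a : 𝒜 i j) :
    torusAct t eN eD (baseChange H V G) i j a =
      diagonal (fun r => t ^ eN j r) * H j * V i j a *
        (diagonal (fun c => t ^ eD i c) * (G i)⁻¹)⁻¹ := by
  have hinv : (diagonal fun c => t ^ eD i c)⁻¹ = diagonal fun c => t ^ (-eD i c) :=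
    inv_eq_left_inv (by simp [zpow_ne_zero, ht, ← Pi.one_def])
  rw [Matrix.mul_inv_rev, hinv,
    nonsing_inv_nonsing_inv _ ((isUnit_iff_isUnit_det _).mp (Pi.isUnit_iff.mp hG i))]
  simp only [torusAct, baseChange, Matrix.mul_assoc]

lemma HasNonnegWeights.tendsto_baseChange {eN : ∀ j, N j → ℤ} {eD : ∀ i, D i → ℤ}
    {H : ∀ j, Matrix (N j) (N j) ℝ} {V : QuiverDatum D N 𝒜} {G : ∀ i, Matrix (D i) (D i) ℝ}
    (h : HasNonnegWeights eN eD (baseChange H V G)) (hG : IsUnit G) :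
    Tendsto (fun (t : ℝ) i j a => diagonal (fun r => t ^ eN j r) * H j * V i j a *
      (diagonal (fun c => t ^ eD i c) * (G i)⁻¹)⁻¹) (𝓝[≠] 0)
      (𝓝 (weightZeroPart eN eD (baseChange H V G))) := by
  refine (tendsto_torusAct h).congr' ?_
  filter_upwards [self_mem_nhdsWithin] with t ht
  funext i j a
  exact torusAct_baseChange ht eN eD H V hG i j a

end Limits

section FinIndexed

variable {k m : ℕ} {d : Fin k → ℕ} {n : Fin m → ℕ} {A : Fin k → Fin m → ℕ} {p : Fin m → ℝ}
  {V : QuiverDatum (fun i => Fin (d i)) (fun j => Fin (n j)) (fun i j => Fin (A i j))}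

lemma geometric_iff_isGeometric : Geometric p V ↔ IsGeometric p V := by
  simp [Geometric, IsGeometric, domainGram, codomainGram, funext_iff]

lemma Feasible.of_cap_pos (h : 0 < cap p V) : Feasible p V := by
  have hbdd : BddBelow {x | ∃ Y : ∀ j, Matrix (Fin (n j)) (Fin (n j)) ℝ,
      (∀ j, (Y j).PosDef) ∧ x = capVal p V Y} := by
    by_contra hunbdd
    exact h.ne' (Real.sInf_of_not_bddBelow hunbdd)
  exact ⟨cap p V, h, capacityAtLeast_iff.mpr fun Y hY => csInf_le hbdd ⟨Y, hY, rfl⟩⟩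

end FinIndexed

end QuiverDatum

theorem feasible_degenerates_to_geometric_general {k m : ℕ} {d : Fin k → ℕ} {n : Fin m → ℕ}
    {A : Fin k → Fin m → ℕ} (p : Fin m → ℝ) (hp : ∀ j, 0 < p j)
    (V : ∀ i : Fin k, ∀ j : Fin m, Fin (A i j) → Matrix (Fin (n j)) (Fin (d i)) ℝ)
    (hfeas : 0 < cap p V) :
    ∃ (W : ∀ i : Fin k, ∀ j : Fin m, Fin (A i j) → Matrix (Fin (n j)) (Fin (d i)) ℝ)
      (Ag Bg : ∀ i : Fin k, Matrix (Fin (d i)) (Fin (d i)) ℝ)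
      (Ah Bh : ∀ j : Fin m, Matrix (Fin (n j)) (Fin (n j)) ℝ)
      (eD : ∀ i : Fin k, Fin (d i) → ℤ) (eN : ∀ j : Fin m, Fin (n j) → ℤ),
      IsGeometric p W ∧
      (∀ i, IsUnit (Ag i).det) ∧ (∀ i, IsUnit (Bg i).det) ∧
      (∀ j, IsUnit (Ah j).det) ∧ (∀ j, IsUnit (Bh j).det) ∧
      Tendsto
        (fun t : ℝ => fun i : Fin k => fun j : Fin m => fun a : Fin (A i j) =>
          (Bh j * Matrix.diagonal (fun r => t ^ (eN j r)) * Ah j) * V i j a *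
            (Bg i * Matrix.diagonal (fun c => t ^ (eD i c)) * Ag i)⁻¹)
        (𝓝[≠] (0 : ℝ)) (𝓝 W) ∧
      (∀ ε : ℝ, 0 < ε →
        ∃ (Cg : ∀ i : Fin k, Matrix (Fin (d i)) (Fin (d i)) ℝ)
          (Ch : ∀ j : Fin m, Matrix (Fin (n j)) (Fin (n j)) ℝ),
          (∀ i, IsUnit (Cg i).det) ∧ (∀ j, IsUnit (Ch j).det) ∧
          Real.sqrt (∑ i : Fin k, ∑ j : Fin m, ∑ a : Fin (A i j),
            ∑ r : Fin (n j), ∑ c : Fin (d i),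
              ((Ch j * V i j a * (Cg i)⁻¹) r c - W i j a r c) ^ 2) < ε) := by
  obtain ⟨H, G, eN, eD, hH, hG, hweights, hgeom⟩ :=
    (QuiverDatum.Feasible.of_cap_pos hfeas).degeneratesToGeometric hp
  have hlim := hweights.tendsto_baseChange hG
  simp only [Pi.isUnit_iff, isUnit_iff_isUnit_det] at hH hG
  have hG' (i : Fin k) : IsUnit (G i)⁻¹.det := isUnit_nonsing_inv_det _ (hG i)
  refine ⟨_, fun i => (G i)⁻¹, 1, H, 1, eD, eN, QuiverDatum.geometric_iff_isGeometric.mp hgeom,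
    hG', by simp, hH, by simp, by simpa only [Pi.one_apply, Matrix.one_mul] using hlim,
    fun ε hε => ?_⟩
  obtain ⟨t, hclose, ht⟩ :=
    ((QuiverDatum.eventually_sqrt_sum_sq_sub_lt hlim hε).and self_mem_nhdsWithin).exists
  have hdiag {q : ℕ} (e : Fin q → ℤ) : IsUnit (diagonal fun r => t ^ e r).det :=
    (isUnit_iff_isUnit_det _).mp (QuiverDatum.isUnit_diagonal_zpow ht e)
  refine ⟨_, _, fun i => ?_, fun j => ?_, hclose⟩
  · rw [det_mul]
    exact (hdiag (eD i)).mul (hG' i)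
  · rw [det_mul]
    exact (hdiag (eN j)).mul (hH j)

/-- For positive rational weights and a feasible datum `(V, p)`, there
exist a geometric datum `(W, p)` of the same dimension vector and a one-parameter family
of base changes `λ̃(t)_x = B_x λ(t)_x A_x` (with `A_x, B_x` fixed invertible matrices and
`λ(t)_x` diagonal with entries integer powers of `t`) such that `λ̃(t)·V → W` as `t → 0`.
In particular, for every `ε > 0` there is a point `Ṽ` of the orbit of `V` within Frobenius
distance `ε` of `W`. -/
theorem feasible_degenerates_to_geometric {k m : ℕ} (hk : 0 < k) (hm : 0 < m)
    {d : Fin k → ℕ} {n : Fin m → ℕ} {A : Fin k → Fin m → ℕ} (p : Fin m → ℚ)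
    (hd : ∀ i, 0 < d i) (hn : ∀ j, 0 < n j) (hp : ∀ j, 0 < p j)
    (hbal : ∑ i : Fin k, (d i : ℝ) = ∑ j : Fin m, (p j : ℝ) * (n j : ℝ))
    (V : ∀ i : Fin k, ∀ j : Fin m, Fin (A i j) → Matrix (Fin (n j)) (Fin (d i)) ℝ)
    (hfeas : 0 < cap (fun j => (p j : ℝ)) V) :
    ∃ (W : ∀ i : Fin k, ∀ j : Fin m, Fin (A i j) → Matrix (Fin (n j)) (Fin (d i)) ℝ)
      (Ag Bg : ∀ i : Fin k, Matrix (Fin (d i)) (Fin (d i)) ℝ)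
      (Ah Bh : ∀ j : Fin m, Matrix (Fin (n j)) (Fin (n j)) ℝ)
      (eD : ∀ i : Fin k, Fin (d i) → ℤ) (eN : ∀ j : Fin m, Fin (n j) → ℤ),
      IsGeometric (fun j => (p j : ℝ)) W ∧
      (∀ i, IsUnit (Ag i).det) ∧ (∀ i, IsUnit (Bg i).det) ∧
      (∀ j, IsUnit (Ah j).det) ∧ (∀ j, IsUnit (Bh j).det) ∧
      Tendsto
        (fun t : ℝ => fun i : Fin k => fun j : Fin m => fun a : Fin (A i j) =>
          (Bh j * Matrix.diagonal (fun r => t ^ (eN j r)) * Ah j) * V i j a *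
            (Bg i * Matrix.diagonal (fun c => t ^ (eD i c)) * Ag i)⁻¹)
        (𝓝[≠] (0 : ℝ)) (𝓝 W) ∧
      (∀ ε : ℝ, 0 < ε →
        ∃ (Cg : ∀ i : Fin k, Matrix (Fin (d i)) (Fin (d i)) ℝ)
          (Ch : ∀ j : Fin m, Matrix (Fin (n j)) (Fin (n j)) ℝ),
          (∀ i, IsUnit (Cg i).det) ∧ (∀ j, IsUnit (Ch j).det) ∧
          Real.sqrt (∑ i : Fin k, ∑ j : Fin m, ∑ a : Fin (A i j),
            ∑ r : Fin (n j), ∑ c : Fin (d i),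
              ((Ch j * V i j a * (Cg i)⁻¹) r c - W i j a r c) ^ 2) < ε) := by
  exact feasible_degenerates_to_geometric_general _ (fun j => by exact_mod_cast hp j) V hfeas
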